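/- arXiv:1301.4845 — 3 statements merged into one kernel-verified Lean document; each statement's English description precedes it below -/
import Mathlib

section
/- Let G be a generalised sequential game with moves X_1, …, X_n, outcome set R, outcome function q : ∏_{i=1}^n X_i → R and quantifiers φ_1, …, φ_n, and let π be an optimal strategy for G. Then π is a generalised Nash equilibrium of the normal form G†: for every 1 ≤ i ≤ n, q(π†) ∈ φ_i(λ x ∈ X_i. q((π(i↦ λσ. x))†)), i.e. q†(π) ∈ φ_i†(λ f. q†(π(i↦f))) for every i. -/
/-- The full play of a sequential game determined by the strategy `π`, given that
the coordinates `j` with `j.val < m` are prescribed by `s` and all later moves are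
made according to `π` (each `π j` consults the play at all earlier coordinates). -/
def seqPlay {n : ℕ} {X : Fin n → Type*}
    (π : ∀ i : Fin n, (∀ j : Fin n, j < i → X j) → X i)
    (m : ℕ) (s : ∀ j : Fin n, X j) (j : Fin n) : X j :=
  if j.val < m then s j else π j (fun k hk => seqPlay π m s k)
  termination_by j.val
  decreasing_by exact hk

/-- The strategic play `π†` of a strategy `π`: every move is made according to `π`. -/
def stratPlay {n : ℕ} {X : Fin n → Type*}
    (π : ∀ i : Fin n, (∀ j : Fin n, j < i → X j) → X i) (j : Fin n) : X j :=
  π j (fun k hk => stratPlay π k)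
  termination_by j.val
  decreasing_by exact hk

theorem seqPlay_eq_stratPlay {n : ℕ} {X : Fin n → Type*}
    (π : ∀ i : Fin n, (∀ j : Fin n, j < i → X j) → X i) (m : ℕ) :
    ∀ (b : ℕ) (j : Fin n), j.val = b → seqPlay π m (stratPlay π) j = stratPlay π j := by
  intro b
  induction b using Nat.strong_induction_on with
  | _ b ih =>
    intro j hj
    rw [seqPlay]
    split_ifs with h
    · rfl
    · rw [stratPlay]
      congr 1
      funext k hk
      exact ih k.val (hj ▸ hk) k rfl

theorem stratPlay_update_lt {n : ℕ} {X : Fin n → Type*}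
    (π : ∀ i : Fin n, (∀ j : Fin n, j < i → X j) → X i) (i : Fin n) (x : X i) :
    ∀ (b : ℕ) (j : Fin n), j.val = b → j < i →
      stratPlay (Function.update π i (fun _ => x)) j = stratPlay π j := by
  intro b
  induction b using Nat.strong_induction_on with
  | _ b ih =>
    intro j hj hji
    rw [stratPlay, stratPlay, Function.update_of_ne hji.ne]
    congr 1
    funext k hk
    exact ih k.val (hj ▸ hk) k rfl (hk.trans hji)

theorem seqPlay_update {n : ℕ} {X : Fin n → Type*}
    (π : ∀ i : Fin n, (∀ j : Fin n, j < i → X j) → X i) (i : Fin n) (x : X i) :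
    ∀ (b : ℕ) (j : Fin n), j.val = b →
      seqPlay π (i.val + 1) (Function.update (stratPlay π) i x) j =
        stratPlay (Function.update π i (fun _ => x)) j := by
  intro b
  induction b using Nat.strong_induction_on with
  | _ b ih =>
    intro j hj
    rw [seqPlay]
    split_ifs with h
    · by_cases hji : j = i
      · subst hji
        rw [stratPlay]
        simp
      · rw [Function.update_of_ne hji, stratPlay_update_lt π i x j.val j rfl]
        exact lt_of_le_of_ne (Fin.le_def.mpr (Nat.lt_succ_iff.mp h)) hji
    · have hji : j ≠ i := by
        rintro rfl
        omega
      rw [stratPlay, Function.update_of_ne hji]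
      congr 1
      funext k hk
      exact ih k.val (hj ▸ hk) k rfl

/-- Normal form soundness: an optimal strategy π of a generalised sequential game
(with moves `X i`, outcome set `R`, outcome function `q` and quantifiers `φ i`)
is a generalised Nash equilibrium of the normal form: for every player `i`,
`q(π†) ∈ φ_i (fun x => q ((π(i ↦ fun _ => x))†))`. -/
theorem stmt_2 {n : ℕ} {X : Fin n → Type*} [∀ i, Nonempty (X i)] {R : Type*}
    (q : (∀ i : Fin n, X i) → R)
    (φ : ∀ i : Fin n, (X i → R) → Set R)
    (π : ∀ i : Fin n, (∀ j : Fin n, j < i → X j) → X i)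
    (hopt : ∀ (i : Fin n) (s : ∀ j : Fin n, X j),
      q (seqPlay π i.val s) ∈
        φ i (fun x => q (seqPlay π (i.val + 1) (Function.update s i x)))) :
    ∀ i : Fin n,
      q (stratPlay π) ∈
        φ i (fun x => q (stratPlay (Function.update π i (fun _ => x)))) := by
  intro i
  have h := hopt i (stratPlay π)
  have h1 : seqPlay π i.val (stratPlay π) = stratPlay π :=
    funext fun j => seqPlay_eq_stratPlay π i.val j.val j rfl
  have h2 : ∀ x, seqPlay π (i.val + 1) (Function.update (stratPlay π) i x) =
      stratPlay (Function.update π i (fun _ => x)) :=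
    fun x => funext fun j => seqPlay_update π i x j.val j rfl
  simpa only [h1, h2] using h
end

section
/- Let X, Y, R be nonempty sets, let q : X × Y → R, and let φ : (X → R) → R and ψ : (Y → R) → R be single-valued total quantifiers attained by selection functions ε : (X → R) → X and δ : (Y → R) → Y, i.e. p(ε(p)) = φ(p) for all p : X → R and p(δ(p)) = ψ(p) for all p : Y → R. Define a = ε(λx. q(x, δ(λy. q(x,y)))) and b = δ(λy. q(ε(λx. q(x,y)), y)) (the binary Berardi–Bezem–Coquand functional applied to (ε, δ, q)). Then (a, b) is a ψ-φ strategy profile: (i) for every f : X → Y satisfying q(x, f(x)) = ψ(λy. q(x,y)) for all x ∈ X, one has q(a, f(a)) = φ(λx. q(x, f(x))); and (ii) for every g : Y → X satisfying q(g(y), y) = φ(λx. q(x,y)) for all y ∈ Y, one has q(g(b), b) = ψ(λy. q(g(y), y)). -/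
/-- The binary Berardi–Bezem–Coquand functional computes a ψ-φ strategy profile
in a 2-player game with single outcome space, when the single-valued total
quantifiers φ and ψ are attained by selection functions ε and δ. -/
theorem stmt_3 {X Y R : Type*} [Nonempty X] [Nonempty Y] [Nonempty R]
    (q : X × Y → R) (φ : (X → R) → R) (ψ : (Y → R) → R)
    (ε : (X → R) → X) (δ : (Y → R) → Y)
    (hε : ∀ p : X → R, p (ε p) = φ p)
    (hδ : ∀ p : Y → R, p (δ p) = ψ p) :
    (∀ f : X → Y, (∀ x, q (x, f x) = ψ (fun y => q (x, y))) →
      q (ε (fun x => q (x, δ (fun y => q (x, y)))),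
         f (ε (fun x => q (x, δ (fun y => q (x, y)))))) =
        φ (fun x => q (x, f x))) ∧
    (∀ g : Y → X, (∀ y, q (g y, y) = φ (fun x => q (x, y))) →
      q (g (δ (fun y => q (ε (fun x => q (x, y)), y))),
         δ (fun y => q (ε (fun x => q (x, y)), y))) =
        ψ (fun y => q (g y, y))) := by
  constructor
  · intro f hf
    have e : (fun x => q (x, δ (fun y => q (x, y)))) = fun x => q (x, f x) := by
      funext x
      exact (hδ (fun y => q (x, y))).trans (hf x).symm
    rw [e]
    exact hε (fun x => q (x, f x))
  · intro g hg
    have e : (fun y => q (ε (fun x => q (x, y)), y)) = fun y => q (g y, y) := by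
      funext y
      exact (hε (fun x => q (x, y))).trans (hg y).symm
    rw [e]
    exact hδ (fun y => q (g y, y))
end

section
/- Let q_X, q_Y : [0,1] × [0,1] → [0,1] be continuous functions. Then there exist a, b ∈ [0,1] such that a = ∫₀¹ q_X(x, b) dx and b = ∫₀¹ q_Y(a, y) dy. (Equivalently, the continuous map [0,1]² → [0,1]², (a,b) ↦ (∫₀¹ q_X(x,b) dx, ∫₀¹ q_Y(a,y) dy), has a fixed point; such a pair (a,b) is a generalised Nash equilibrium of the 2-player game on [0,1] × [0,1] in which both players' quantifiers are the integration quantifier p ↦ ∫₀¹ p.) -/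
theorem aux_int (q : ℝ → ℝ → ℝ)
    (hc : ContinuousOn (fun p : ℝ × ℝ => q p.1 p.2) (Set.Icc (0 : ℝ) 1 ×ˢ Set.Icc (0 : ℝ) 1))
    (hm : ∀ s ∈ Set.Icc (0 : ℝ) 1, ∀ t ∈ Set.Icc (0 : ℝ) 1, q s t ∈ Set.Icc (0 : ℝ) 1) :
    ContinuousOn (fun s => ∫ t in (0 : ℝ)..1, q s t) (Set.Icc 0 1) ∧
    Set.MapsTo (fun s => ∫ t in (0 : ℝ)..1, q s t) (Set.Icc 0 1) (Set.Icc 0 1) := by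
  let c : ℝ → ℝ := fun t => max 0 (min 1 t)
  have hcc : Continuous c := by fun_prop
  have hcm : ∀ t, c t ∈ Set.Icc (0 : ℝ) 1 := fun t =>
    ⟨le_max_left _ _, max_le zero_le_one (min_le_left _ _)⟩
  have hci : ∀ t ∈ Set.Icc (0 : ℝ) 1, c t = t := fun t ht => by
    simp [c, ht.1, ht.2]
  have hq : Continuous (fun p : ℝ × ℝ => q (c p.1) (c p.2)) :=
    hc.comp_continuous (f := fun p : ℝ × ℝ => (c p.1, c p.2)) (by fun_prop)
      (fun p => ⟨hcm _, hcm _⟩)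
  have hF : Continuous (fun s => ∫ t in (0 : ℝ)..1, q (c s) (c t)) :=
    intervalIntegral.continuous_parametric_intervalIntegral_of_continuous'
      (f := fun s t => q (c s) (c t)) hq 0 1
  have he : ∀ s ∈ Set.Icc (0 : ℝ) 1,
      ∫ t in (0 : ℝ)..1, q s t = ∫ t in (0 : ℝ)..1, q (c s) (c t) := by
    intro s hs
    apply intervalIntegral.integral_congr
    intro t ht
    rw [Set.uIcc_of_le zero_le_one] at ht
    simp only [hci s hs, hci t ht]
  refine ⟨hF.continuousOn.congr he, fun s hs => ?_⟩
  have hi : IntervalIntegrable (fun t => q (c s) (c t)) MeasureTheory.volume 0 1 :=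
    Continuous.intervalIntegrable
      (hq.comp (f := fun t : ℝ => (s, t)) (by fun_prop)) _ _
  simp only [he s hs]
  constructor
  · exact intervalIntegral.integral_nonneg zero_le_one
      (fun t _ => (hm _ (hcm s) _ (hcm t)).1)
  · calc _ ≤ ∫ t in (0 : ℝ)..1, (1 : ℝ) :=
          intervalIntegral.integral_mono_on zero_le_one hi (by simp)
            (fun t _ => (hm _ (hcm s) _ (hcm t)).2)
      _ = 1 := by simp

/-- Existence of a generalised Nash equilibrium for the 2-player game on
`[0,1] × [0,1]` with both quantifiers given by integration: for continuous
`q_X, q_Y : [0,1]² → [0,1]` there exist `a, b ∈ [0,1]` with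
`a = ∫₀¹ q_X(x, b) dx` and `b = ∫₀¹ q_Y(a, y) dy`. -/
theorem stmt_15 (qX qY : ℝ × ℝ → ℝ)
    (hXc : ContinuousOn qX (Set.Icc (0 : ℝ) 1 ×ˢ Set.Icc (0 : ℝ) 1))
    (hYc : ContinuousOn qY (Set.Icc (0 : ℝ) 1 ×ˢ Set.Icc (0 : ℝ) 1))
    (hXm : ∀ p ∈ Set.Icc (0 : ℝ) 1 ×ˢ Set.Icc (0 : ℝ) 1, qX p ∈ Set.Icc (0 : ℝ) 1)
    (hYm : ∀ p ∈ Set.Icc (0 : ℝ) 1 ×ˢ Set.Icc (0 : ℝ) 1, qY p ∈ Set.Icc (0 : ℝ) 1) :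
    ∃ a ∈ Set.Icc (0 : ℝ) 1, ∃ b ∈ Set.Icc (0 : ℝ) 1,
      a = ∫ x in (0 : ℝ)..1, qX (x, b) ∧ b = ∫ y in (0 : ℝ)..1, qY (a, y) := by
  obtain ⟨hF, hFm⟩ := aux_int (fun b x => qX (x, b))
    (hXc.comp (f := fun p : ℝ × ℝ => (p.2, p.1)) (by fun_prop) (fun p hp => ⟨hp.2, hp.1⟩))
    (fun s hs t ht => hXm _ ⟨ht, hs⟩)
  obtain ⟨hG, hGm⟩ := aux_int (fun a y => qY (a, y)) hYc (fun s hs t ht => hYm _ ⟨hs, ht⟩)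
  obtain ⟨a, ha, hfix⟩ := exists_mem_Icc_isFixedPt_of_mapsTo (hF.comp hG hGm) zero_le_one
    (hFm.comp hGm)
  exact ⟨a, ha, _, hGm ha, hfix.symm, rfl⟩
end
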